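/- On a Poisson manifold $P$ with Poisson bivector $\pi$, the bracket on one-forms defined by $[\omega,\theta] = L_{X_\omega}\theta - L_{X_\theta}\omega - d(\pi(\omega,\theta))$, where $X_\omega = \pi^\#\omega$, satisfies the Jacobi identity, making $\Omega^1(P)$ a Lie algebra. -/

import Mathlib

/-- An abstract model of the Cartan calculus of a Poisson manifold `P`.
Here `F` plays the role of the algebra `C^∞(P)` of smooth functions, `V` of the
`C^∞(P)`-module of vector fields, and `Ω1`, `Ω2` of the spaces of differential
1- and 2-forms.  The fields record the standard operations of differential
calculus (action of vector fields on functions, Lie bracket of vector fields,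
exterior derivative, pairing of forms and vector fields, interior product, Lie
derivative via Cartan's magic formula) together with their standard identities,
and the data of a Poisson bivector `π` through its induced bundle map
`sharp = π^♯` (so that `π(ω,θ) = ⟨π^♯ω, θ⟩`), the antisymmetry of `π`, the
Jacobi identity for the Poisson bracket `{f,g} = π(df,dg)`, and the fact that
`π^♯` intertwines hamiltonian one-forms with hamiltonian vector fields. -/
structure PoissonCalc (F V Ω1 Ω2 : Type*) [CommRing F] [Algebra ℝ F]
    [AddCommGroup V] [Module F V]
    [AddCommGroup Ω1] [Module ℝ Ω1] [Module F Ω1]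
    [AddCommGroup Ω2] [Module ℝ Ω2] where
  /-- action of a vector field on a function, `X(f)` -/
  act : V → F → F
  act_add : ∀ X f g, act X (f + g) = act X f + act X g
  act_mul : ∀ X f g, act X (f * g) = f * act X g + g * act X f
  act_addV : ∀ X Y f, act (X + Y) f = act X f + act Y f
  act_smulV : ∀ (f : F) (X : V) (g : F), act (f • X) g = f * act X g
  /-- Lie bracket of vector fields -/
  lieV : V → V → V
  act_lieV : ∀ X Y f, act (lieV X Y) f = act X (act Y f) - act Y (act X f)
  /-- exterior derivative on functions -/
  d0 : F →ₗ[ℝ] Ω1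
  d0_const : ∀ c : ℝ, d0 (algebraMap ℝ F c) = 0
  /-- exterior derivative on one-forms -/
  d1 : Ω1 →ₗ[ℝ] Ω2
  d1_d0 : ∀ f, d1 (d0 f) = 0
  /-- evaluation of a one-form on a vector field, `ω(X)` -/
  pair : V → Ω1 → F
  pair_addV : ∀ X Y ω, pair (X + Y) ω = pair X ω + pair Y ω
  pair_add : ∀ X ω θ, pair X (ω + θ) = pair X ω + pair X θ
  pair_smulV : ∀ (f : F) (X : V) (ω : Ω1), pair (f • X) ω = f * pair X ω
  pair_smul : ∀ (X : V) (f : F) (ω : Ω1), pair X (f • ω) = f * pair X ω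
  pair_d0 : ∀ X f, pair X (d0 f) = act X f
  /-- interior product of a vector field with a two-form -/
  ι2 : V → Ω2 → Ω1
  /-- Lie derivative of one-forms -/
  L : V → Ω1 → Ω1
  /-- Cartan's magic formula `L_X = ι_X d + d ι_X` -/
  cartan : ∀ X ω, L X ω = ι2 X (d1 ω) + d0 (pair X ω)
  L_lieV : ∀ X Y ω, L (lieV X Y) ω = L X (L Y ω) - L Y (L X ω)
  L_pair : ∀ X Y ω, act X (pair Y ω) = pair Y (L X ω) + pair (lieV X Y) ω
  L_smul : ∀ (X : V) (f : F) (ω : Ω1), L X (f • ω) = f • L X ω + act X f • ω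
  /-- one-forms are generated over functions by exact one-forms -/
  span_exact : ∀ ω : Ω1, ω ∈ Submodule.span F (Set.range d0)
  /-- the bundle map `π^♯ : T^*P → TP` induced by the Poisson bivector -/
  sharp : Ω1 → V
  sharp_add : ∀ ω θ, sharp (ω + θ) = sharp ω + sharp θ
  sharp_smul : ∀ (f : F) (ω : Ω1), sharp (f • ω) = f • sharp ω
  /-- antisymmetry of the Poisson bivector: `π(ω,θ) = -π(θ,ω)` -/
  pair_sharp_skew : ∀ ω θ, pair (sharp ω) θ = - (pair (sharp θ) ω)
  /-- the Jacobi identity for the Poisson bracket `{f,g} = π(df,dg)` -/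
  jacobi : ∀ f g h : F,
    pair (sharp (d0 f)) (d0 (pair (sharp (d0 g)) (d0 h))) =
      pair (sharp (d0 (pair (sharp (d0 f)) (d0 g)))) (d0 h) +
      pair (sharp (d0 g)) (d0 (pair (sharp (d0 f)) (d0 h)))
  /-- `π^♯ d{f,g} = [π^♯ df, π^♯ dg]`, i.e. `X_{{f,g}} = [X_f, X_g]` -/
  sharp_hamiltonian : ∀ f g : F,
    sharp (d0 (pair (sharp (d0 f)) (d0 g))) = lieV (sharp (d0 f)) (sharp (d0 g))

namespace PoissonCalc

variable {F V Ω1 Ω2 : Type*} [CommRing F] [Algebra ℝ F]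
    [AddCommGroup V] [Module F V]
    [AddCommGroup Ω1] [Module ℝ Ω1] [Module F Ω1]
    [AddCommGroup Ω2] [Module ℝ Ω2]
variable (C : PoissonCalc F V Ω1 Ω2)

/-- The Poisson bivector evaluated on two one-forms: `π(ω,θ) = ⟨π^♯ω, θ⟩`. -/
def piv (ω θ : Ω1) : F := C.pair (C.sharp ω) θ

/-- The bracket of one-forms on a Poisson manifold:
`[ω,θ] = L_{X_ω}θ - L_{X_θ}ω - d(π(ω,θ))`, where `X_ω = π^♯ω`. -/
def kbr (ω θ : Ω1) : Ω1 :=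
  C.L (C.sharp ω) θ - C.L (C.sharp θ) ω - C.d0 (C.piv ω θ)

end PoissonCalc

/-!
The Jacobiator of the bracket reduces, by `[L_X, d] = 0` and `L_{[X, Y]} = [L_X, L_Y]`, to `d` of
a scalar expression. Both this and the anchor identity `π^♯[ω, θ] = [π^♯ω, π^♯θ]` (tested against
one-forms) follow from the vanishing of the trilinear expression
`⟨π^♯θ, L_{π^♯ω} η⟩ + ⟨π^♯η, L_{π^♯θ} ω⟩ + ⟨π^♯ω, L_{π^♯η} θ⟩`, which on exact forms is the Jacobi
identity of the Poisson bracket.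

Additivity of `L_X` on one-forms is not among the axioms of `PoissonCalc`. The defect
`L_X (ω + θ) - L_X ω - L_X θ` is homogeneous over functions and has the exact forms as periods, and
a homogeneous map vanishes on the span of its periods, even if it is not additive.
-/

section PeriodicMap

variable {F N M : Type*} [CommRing F] [AddCommGroup N] [Module F N]
    [AddCommGroup M] [Module F M] {l : N →[F] M}

/-- The homogeneous map `l` intertwines the affine map `v ↦ p • v - a` with multiplication by `p`.
Such pairs `(p, a)` include the homotheties and the translations by periods of `l`, and are closed
under composition. -/
def IsAffineCovariant (l : N →[F] M) (p : F) (a : N) : Prop :=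
  ∀ v, l (p • v - a) = p • l v

theorem isAffineCovariant_zero (l : N →[F] M) (p : F) : IsAffineCovariant l p 0 := fun v => by
  rw [sub_zero, map_smul]

theorem IsAffineCovariant.mul_add_smul {p : F} {a e : N} (h : IsAffineCovariant l p a)
    (he : Function.Periodic l e) (u : F) : IsAffineCovariant l (p * u) (a + p • e) := fun v =>
  calc l ((p * u) • v - (a + p • e))
      = l (p • (u • v - e) - a) := by rw [smul_sub, mul_smul, sub_sub, add_comm]
    _ = p • l (u • v) := by rw [h, he.sub_eq]
    _ = (p * u) • l v := by rw [map_smul, mul_smul]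

theorem IsAffineCovariant.sub_smul_eq_zero {p q : F} {a b v : N} (hp : IsAffineCovariant l p a)
    (hq : IsAffineCovariant l q b) (hv : (p - q) • v = a - b) : (p - q) • l v = 0 := by
  have same_image : p • v - a = q • v - b := by
    rw [sub_smul] at hv
    rw [sub_eq_sub_iff_sub_eq_sub, hv]
  rw [sub_smul, ← hp, ← hq, same_image, sub_self]

theorem exists_mul_sub_mul_eq {D y p q : F} (hy : y ∣ D) (hq : D ∣ q - 1) (hpq : p - q = D * y)
    (z : F) : ∃ u v, p * u - q * v = D * z ∧ D ∣ q * v - 1 := by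
  have coprime_D : IsCoprime q D := by simpa using IsCoprime.add_one_left_of_dvd hq
  have coprime_pq : IsCoprime p q := by
    have coprime_mul : IsCoprime q (D * y) :=
      coprime_D.mul_right (coprime_D.of_isCoprime_of_dvd_right hy)
    simpa [← hpq] using coprime_mul.symm.add_mul_left_left 1
  obtain ⟨s, t, hst⟩ := coprime_pq
  refine ⟨1 + D * (s * (z - y)), 1 - D * (t * (z - y)), ?_, ?_⟩
  · linear_combination hpq + D * (z - y) * hst
  · have : q * (1 - D * (t * (z - y))) - 1 = (q - 1) - D * (q * (t * (z - y))) := by ring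
    exact this ▸ hq.sub (dvd_mul_right _ _)

-- Adjoining an index applies the hypothesis with `z = y i` and then corrects `p - q` by Bézout;
-- the congruence `q ≡ 1` modulo `D` is what keeps `p` and `q` coprime.
theorem exists_isAffineCovariant_pair {ι : Type*} (s : Finset ι) {e : ι → N}
    (he : ∀ i ∈ s, Function.Periodic l (e i)) {y : ι → F} {D : F} (hy : ∀ i ∈ s, y i ∣ D) (z : F) :
    ∃ p q a b, IsAffineCovariant l p a ∧ IsAffineCovariant l q b ∧
      a - b = D • ∑ i ∈ s, y i • e i ∧ p - q = D * z ∧ D ∣ q - 1 := by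
  classical
  induction s using Finset.induction_on generalizing z with
  | empty =>
    exact ⟨1 + D * z, 1, 0, 0, isAffineCovariant_zero l _, isAffineCovariant_zero l _,
      by simp, by ring, by simp⟩
  | insert i s hi ih =>
    simp only [Finset.forall_mem_insert] at he hy
    obtain ⟨p, q, a, b, hp, hq, hab, hpq, hqD⟩ := ih he.2 hy.2 (y i)
    obtain ⟨u, v, huv, hvD⟩ := exists_mul_sub_mul_eq hy.1 hqD hpq z
    refine ⟨p * u, q * v, a + p • e i, b + q • e i, hp.mul_add_smul he.1 u,
      hq.mul_add_smul he.1 v, ?_, huv, hvD⟩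
    rw [add_sub_add_comm, hab, ← sub_smul, hpq, Finset.sum_insert hi, smul_add, mul_smul, add_comm]

theorem smul_map_sum_smul_eq_zero {ι : Type*} {s : Finset ι} {e : ι → N}
    (he : ∀ i ∈ s, Function.Periodic l (e i)) {y : ι → F} {D : F} (hy : ∀ i ∈ s, y i ∣ D) :
    D • l (∑ i ∈ s, y i • e i) = 0 := by
  obtain ⟨p, q, a, b, hp, hq, hab, hpq, -⟩ := exists_isAffineCovariant_pair s he hy 1
  rw [mul_one] at hpq
  rw [← hpq] at hab ⊢
  exact hp.sub_smul_eq_zero hq hab.symm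

theorem map_sum_smul_eq_zero {ι : Type*} {s : Finset ι} {e : ι → N}
    (he : ∀ i ∈ s, Function.Periodic l (e i)) (y : ι → F) : l (∑ i ∈ s, y i • e i) = 0 := by
  classical
  -- The expansion of `∏ i, ((y i + 1) - y i) = 1` writes `1` as a sum of elements each of which
  -- kills `l v`: since the `e i` are periods, `y i` may be replaced by `y i + 1` for `i ∈ t`.
  have annihilated : ∀ t ∈ s.powerset,
      ((∏ i ∈ t, (y i + 1)) * ∏ i ∈ s \ t, -y i) • l (∑ i ∈ s, y i • e i) = 0 := by
    intro t ht
    rw [Finset.mem_powerset] at ht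
    have periodic_sum : Function.Periodic l (∑ i ∈ t, e i) :=
      Finset.sum_induction e (Function.Periodic l) (fun _ _ => Function.Periodic.add_period)
        (fun v => by rw [add_zero]) fun i hi => he i (ht hi)
    have shift : ∑ i ∈ s, y i • e i + ∑ i ∈ t, e i =
        ∑ i ∈ s, (y i + if i ∈ t then 1 else 0) • e i := by
      simp only [add_smul, ite_smul, one_smul, zero_smul, Finset.sum_add_distrib,
        Finset.sum_ite_mem, Finset.inter_eq_right.2 ht]
    rw [← periodic_sum, shift]
    refine smul_map_sum_smul_eq_zero he fun i hi => ?_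
    by_cases hit : i ∈ t
    · rw [if_pos hit]
      exact (Finset.dvd_prod_of_mem (fun i => y i + 1) hit).mul_right _
    · rw [if_neg hit, add_zero]
      exact ((dvd_neg.2 dvd_rfl).trans (Finset.dvd_prod_of_mem (fun i => -y i)
        (Finset.mem_sdiff.2 ⟨hi, hit⟩))).mul_left _
  have partition : ∑ t ∈ s.powerset, (∏ i ∈ t, (y i + 1)) * ∏ i ∈ s \ t, -y i = 1 := by
    rw [← Finset.prod_add]
    exact Finset.prod_eq_one fun i _ => by ring
  rw [← one_smul F (l _), ← partition, Finset.sum_smul]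
  exact Finset.sum_eq_zero annihilated

theorem map_eq_zero_of_mem_span_periods {v : N}
    (hv : v ∈ Submodule.span F {e | Function.Periodic l e}) : l v = 0 := by
  obtain ⟨y, s, hs, -, rfl⟩ := Submodule.mem_span_iff_exists_finset_subset.1 hv
  exact map_sum_smul_eq_zero (e := id) hs y

end PeriodicMap

namespace PoissonCalc

variable {F V Ω1 Ω2 : Type*} [CommRing F] [Algebra ℝ F]
    [AddCommGroup V] [Module F V]
    [AddCommGroup Ω1] [Module ℝ Ω1] [Module F Ω1]
    [AddCommGroup Ω2] [Module ℝ Ω2]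
variable (C : PoissonCalc F V Ω1 Ω2)

theorem pair_neg (X : V) (ω : Ω1) : C.pair X (-ω) = -C.pair X ω := by
  simpa using C.pair_smul X (-1) ω

theorem pair_sub (X : V) (ω θ : Ω1) : C.pair X (ω - θ) = C.pair X ω - C.pair X θ := by
  rw [sub_eq_add_neg, C.pair_add, C.pair_neg, sub_eq_add_neg]

theorem act_neg (X : V) (f : F) : C.act X (-f) = -C.act X f := by
  rw [← C.pair_d0, map_neg, C.pair_neg, C.pair_d0]

theorem ι2_zero (X : V) : C.ι2 X 0 = 0 := by
  have L_zero : C.L X 0 = 0 := by simpa using C.L_smul X 0 0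
  have pair_zero : C.pair X 0 = 0 := by simpa using C.pair_smul X 0 0
  simpa [L_zero, pair_zero] using (C.cartan X 0).symm

theorem L_d0 (X : V) (g : F) : C.L X (C.d0 g) = C.d0 (C.act X g) := by
  rw [C.cartan, C.d1_d0, C.ι2_zero, zero_add, C.pair_d0]

theorem L_add_d0 (X : V) (ω : Ω1) (g : F) :
    C.L X (ω + C.d0 g) = C.L X ω + C.d0 (C.act X g) := by
  rw [C.cartan, C.cartan X ω, map_add, C.d1_d0, add_zero, C.pair_add, map_add, C.pair_d0, add_assoc]

/-- The failure of additivity of `L_X`, as a homogeneous map on pairs of one-forms. -/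
def lieDefect (X : V) : Ω1 × Ω1 →[F] Ω1 where
  toFun p := C.L X (p.1 + p.2) - C.L X p.1 - C.L X p.2
  map_smul' f p := by
    simp only [Prod.smul_fst, Prod.smul_snd, ← smul_add, C.L_smul, id]
    simp only [smul_add, smul_sub]
    abel

theorem lieDefect_apply (X : V) (ω θ : Ω1) :
    C.lieDefect X (ω, θ) = C.L X (ω + θ) - C.L X ω - C.L X θ := rfl

theorem periodic_lieDefect_left (X : V) (g : F) :
    Function.Periodic (C.lieDefect X) (C.d0 g, 0) := fun ⟨ω, θ⟩ => by
  rw [Prod.mk_add_mk, add_zero, lieDefect_apply, lieDefect_apply, add_right_comm, C.L_add_d0,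
    C.L_add_d0]
  abel

theorem periodic_lieDefect_right (X : V) (g : F) :
    Function.Periodic (C.lieDefect X) (0, C.d0 g) := fun ⟨ω, θ⟩ => by
  rw [Prod.mk_add_mk, add_zero, lieDefect_apply, lieDefect_apply, ← add_assoc, C.L_add_d0,
    C.L_add_d0]
  abel

theorem L_add (X : V) (ω θ : Ω1) : C.L X (ω + θ) = C.L X ω + C.L X θ := by
  set periods := Submodule.span F {e | Function.Periodic (C.lieDefect X) e}
  have left_mem : (ω, 0) ∈ periods := by
    suffices Submodule.span F (Set.range C.d0) ≤ periods.comap (LinearMap.inl F Ω1 Ω1) from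
      this (C.span_exact ω)
    rw [Submodule.span_le, Set.range_subset_iff]
    exact fun g => Submodule.subset_span (C.periodic_lieDefect_left X g)
  have right_mem : (0, θ) ∈ periods := by
    suffices Submodule.span F (Set.range C.d0) ≤ periods.comap (LinearMap.inr F Ω1 Ω1) from
      this (C.span_exact θ)
    rw [Submodule.span_le, Set.range_subset_iff]
    exact fun g => Submodule.subset_span (C.periodic_lieDefect_right X g)
  have mem : (ω, θ) ∈ periods := by simpa using periods.add_mem left_mem right_mem
  have defect_zero := map_eq_zero_of_mem_span_periods mem
  rwa [lieDefect_apply, sub_sub, sub_eq_zero] at defect_zero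

theorem L_sub (X : V) (ω θ : Ω1) : C.L X (ω - θ) = C.L X ω - C.L X θ :=
  map_sub (AddMonoidHom.mk' (C.L X) (C.L_add X)) ω θ

@[elab_as_elim]
theorem oneForm_induction {P : Ω1 → Prop} (d0 : ∀ g, P (C.d0 g))
    (add : ∀ ω θ, P ω → P θ → P (ω + θ)) (smul : ∀ (f : F) ω, P ω → P (f • ω)) (ω : Ω1) : P ω :=
  Submodule.span_induction (p := fun ω _ => P ω) (Set.forall_mem_range.2 d0)
    (by simpa using d0 0) (fun ω θ _ _ => add ω θ) (fun f ω _ => smul f ω) (C.span_exact ω)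

theorem L_congr {X Y : V} (h : ∀ f, C.act X f = C.act Y f) (ω : Ω1) : C.L X ω = C.L Y ω := by
  induction ω using C.oneForm_induction with
  | d0 g => rw [C.L_d0, C.L_d0, h]
  | add ω θ hω hθ => rw [C.L_add, C.L_add, hω, hθ]
  | smul f ω hω => rw [C.L_smul, C.L_smul, hω, h]

theorem L_addV (X Y : V) (ω : Ω1) : C.L (X + Y) ω = C.L X ω + C.L Y ω := by
  induction ω using C.oneForm_induction with
  | d0 g => rw [C.L_d0, C.L_d0, C.L_d0, C.act_addV, map_add]
  | add ω θ hω hθ => rw [C.L_add, C.L_add, C.L_add, hω, hθ, add_add_add_comm]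
  | smul f ω hω =>
    rw [C.L_smul, C.L_smul, C.L_smul, hω, C.act_addV, add_smul, smul_add, add_add_add_comm]

theorem pair_L_smulV (X Y : V) (f : F) (ω : Ω1) :
    C.pair X (C.L (f • Y) ω) = f * C.pair X (C.L Y ω) + C.act X f * C.pair Y ω := by
  induction ω using C.oneForm_induction with
  | d0 g =>
    simp only [C.L_d0, C.pair_d0, C.act_smulV, C.act_mul]
    ring
  | add ω θ hω hθ =>
    simp only [C.L_add, C.pair_add, hω, hθ]
    ring
  | smul h ω hω =>
    simp only [C.L_smul, C.pair_add, C.pair_smul, C.act_smulV, hω]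
    ring

theorem pair_lieV_swap (X Y : V) (ω : Ω1) :
    C.pair (C.lieV X Y) ω = -C.pair (C.lieV Y X) ω := by
  induction ω using C.oneForm_induction with
  | d0 g => rw [C.pair_d0, C.pair_d0, C.act_lieV, C.act_lieV, neg_sub]
  | add ω θ hω hθ => rw [C.pair_add, C.pair_add, hω, hθ, neg_add]
  | smul f ω hω => rw [C.pair_smul, C.pair_smul, hω, mul_neg]

/-- Half the Schouten bracket `[π, π]`, up to sign, evaluated on three one-forms. -/
def schouten (ω θ η : Ω1) : F :=
  C.pair (C.sharp θ) (C.L (C.sharp ω) η) + C.pair (C.sharp η) (C.L (C.sharp θ) ω) +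
    C.pair (C.sharp ω) (C.L (C.sharp η) θ)

theorem schouten_rotate (ω θ η : Ω1) : C.schouten ω θ η = C.schouten θ η ω := by
  unfold schouten
  ring

theorem schouten_add (ω θ η η' : Ω1) :
    C.schouten ω θ (η + η') = C.schouten ω θ η + C.schouten ω θ η' := by
  simp only [schouten, C.sharp_add, C.L_add, C.L_addV, C.pair_add, C.pair_addV]
  ring

theorem schouten_smul (f : F) (ω θ η : Ω1) :
    C.schouten ω θ (f • η) = f * C.schouten ω θ η := by
  simp only [schouten, C.sharp_smul, C.L_smul, C.pair_add, C.pair_smul, C.pair_smulV,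
    C.pair_L_smulV]
  linear_combination C.act (C.sharp ω) f * C.pair_sharp_skew θ η

theorem schouten_d0 (f g h : F) : C.schouten (C.d0 f) (C.d0 g) (C.d0 h) = 0 := by
  simp only [schouten, C.L_d0, C.pair_d0]
  have jacobi := C.jacobi f g h
  rw [C.pair_sharp_skew (C.d0 (C.pair _ _))] at jacobi
  simp only [C.pair_d0] at jacobi
  have skew (a b : F) : C.act (C.sharp (C.d0 a)) b = -C.act (C.sharp (C.d0 b)) a := by
    simpa only [C.pair_d0] using C.pair_sharp_skew (C.d0 a) (C.d0 b)
  rw [skew g f, skew h g, C.act_neg, C.act_neg]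
  linear_combination -jacobi

theorem schouten_eq_zero_of_exact {ω θ : Ω1} (h : ∀ g, C.schouten ω θ (C.d0 g) = 0) (η : Ω1) :
    C.schouten ω θ η = 0 := by
  induction η using C.oneForm_induction with
  | d0 g => exact h g
  | add η η' hη hη' => rw [C.schouten_add, hη, hη', add_zero]
  | smul f η hη => rw [C.schouten_smul, hη, mul_zero]

theorem schouten_eq_zero (ω θ η : Ω1) : C.schouten ω θ η = 0 := by
  have two_exact (f g : F) (η : Ω1) : C.schouten (C.d0 f) (C.d0 g) η = 0 :=
    C.schouten_eq_zero_of_exact (C.schouten_d0 f g) η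
  have one_exact (f : F) (θ η : Ω1) : C.schouten θ (C.d0 f) η = 0 :=
    C.schouten_eq_zero_of_exact (fun g => by rw [C.schouten_rotate, two_exact]) η
  exact C.schouten_eq_zero_of_exact (fun g => by rw [C.schouten_rotate, one_exact]) η

theorem pair_kbr (X : V) (ω θ : Ω1) :
    C.pair X (C.kbr ω θ) = C.pair X (C.L (C.sharp ω) θ) - C.pair X (C.L (C.sharp θ) ω) -
      C.act X (C.piv ω θ) := by
  rw [kbr, C.pair_sub, C.pair_sub, C.pair_d0]

theorem piv_skew (ω θ : Ω1) : C.piv ω θ = -C.piv θ ω :=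
  C.pair_sharp_skew ω θ

theorem piv_neg (ω θ : Ω1) : C.piv ω (-θ) = -C.piv ω θ :=
  C.pair_neg (C.sharp ω) θ

theorem kbr_skew (ω θ : Ω1) : C.kbr ω θ = -C.kbr θ ω := by
  rw [kbr, kbr, C.piv_skew, map_neg]
  abel

theorem pair_sharp_kbr (ω θ η : Ω1) :
    C.pair (C.sharp (C.kbr ω θ)) η = C.pair (C.lieV (C.sharp ω) (C.sharp θ)) η := by
  have schouten_zero := C.schouten_eq_zero ω θ η
  rw [schouten] at schouten_zero
  have lie_ωθ := C.L_pair (C.sharp ω) (C.sharp θ) η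
  have lie_ωη := C.L_pair (C.sharp ω) (C.sharp η) θ
  have lie_ηω := C.L_pair (C.sharp η) (C.sharp ω) θ
  rw [C.pair_sharp_skew η θ, C.act_neg, C.pair_lieV_swap] at lie_ωη
  rw [C.pair_sharp_skew, C.pair_kbr, piv]
  linear_combination schouten_zero + lie_ωθ + lie_ωη + lie_ηω

theorem L_sharp_kbr (ω θ η : Ω1) :
    C.L (C.sharp (C.kbr ω θ)) η =
      C.L (C.sharp ω) (C.L (C.sharp θ) η) - C.L (C.sharp θ) (C.L (C.sharp ω) η) := by
  rw [← C.L_lieV]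
  refine C.L_congr (fun f => ?_) η
  rw [← C.pair_d0, ← C.pair_d0, C.pair_sharp_kbr]

theorem L_kbr (X : V) (ω θ : Ω1) :
    C.L X (C.kbr ω θ) = C.L X (C.L (C.sharp ω) θ) - C.L X (C.L (C.sharp θ) ω) -
      C.d0 (C.act X (C.piv ω θ)) := by
  rw [kbr, C.L_sub, C.L_sub, C.L_d0]

theorem cyclic_sum_act_piv_add_piv_kbr (ω θ η : Ω1) :
    (C.act (C.sharp ω) (C.piv θ η) + C.piv ω (C.kbr θ η)) +
      (C.act (C.sharp θ) (C.piv η ω) + C.piv θ (C.kbr η ω)) +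
      (C.act (C.sharp η) (C.piv ω θ) + C.piv η (C.kbr ω θ)) = 0 := by
  have schouten_zero := C.schouten_eq_zero ω θ η
  have schouten_swap_zero := C.schouten_eq_zero θ ω η
  rw [schouten] at schouten_zero schouten_swap_zero
  simp only [piv, C.pair_kbr]
  linear_combination schouten_swap_zero - schouten_zero

theorem kbr_jacobi (ω θ η : Ω1) :
    C.kbr ω (C.kbr θ η) = C.kbr (C.kbr ω θ) η + C.kbr θ (C.kbr ω η) := by
  have cyclic := congrArg C.d0 (C.cyclic_sum_act_piv_add_piv_kbr ω θ η)
  rw [C.kbr_skew η ω, C.piv_skew η ω, C.act_neg, C.piv_neg] at cyclic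
  simp only [map_add, map_neg, map_zero] at cyclic
  have expand (α β : Ω1) :
      C.kbr α β = C.L (C.sharp α) β - C.L (C.sharp β) α - C.d0 (C.piv α β) := rfl
  rw [expand ω (C.kbr θ η), expand (C.kbr ω θ) η, expand θ (C.kbr ω η), C.piv_skew (C.kbr ω θ)]
  simp only [C.L_sharp_kbr, C.L_kbr, map_neg]
  linear_combination (norm := module) (-1 : ℤ) • cyclic

end PoissonCalc

/-- On a Poisson manifold `P` with Poisson bivector `π`, the
bracket on one-forms `[ω,θ] = L_{X_ω}θ - L_{X_θ}ω - d(π(ω,θ))`, where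
`X_ω = π^♯ω`, is antisymmetric and satisfies the Jacobi identity, making
`Ω^1(P)` a Lie algebra. -/
theorem koszul_bracket_is_lie_algebra
    {F V Ω1 Ω2 : Type*} [CommRing F] [Algebra ℝ F]
    [AddCommGroup V] [Module F V]
    [AddCommGroup Ω1] [Module ℝ Ω1] [Module F Ω1]
    [AddCommGroup Ω2] [Module ℝ Ω2]
    (C : PoissonCalc F V Ω1 Ω2) :
    (∀ ω θ : Ω1, C.kbr ω θ = - C.kbr θ ω) ∧
    (∀ ω θ η : Ω1,
      C.kbr ω (C.kbr θ η) = C.kbr (C.kbr ω θ) η + C.kbr θ (C.kbr ω η)) :=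
  ⟨C.kbr_skew, C.kbr_jacobi⟩
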